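/- A (right) Leibniz bracket on a vector space $L$ over a field $K$ is a bilinear map $[-,-] : L \times L \to L$ satisfying $[[x,y],z] = [x,[y,z]] + [[x,z],y]$ for all $x,y,z \in L$. Let $(L,[-,-])$ be a Leibniz algebra over a field $K$, and let $N : L \to L$ be a Nijenhuis operator, that is, a linear map with $[N(x),N(y)] = N\big([N(x),y] + [x,N(y)] - N([x,y])\big)$ for all $x,y \in L$. Define $$[x,y]_N := [N(x),y] + [x,N(y)] - N([x,y])$$ for all $x,y \in L$. Then $[-,-]$ and $[-,-]_N$ are two compatible Leibniz brackets on $L$: both are Leibniz brackets, and, writing $[-,-]_1 = [-,-]$ and $[-,-]_2 = [-,-]_N$, for all $x,y,z \in L$, $$[[x,y]_1,z]_2 + [[x,y]_2,z]_1 = [x,[y,z]_1]_2 + [x,[y,z]_2]_1 + [[x,z]_1,y]_2 + [[x,z]_2,y]_1.$$ -/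

import Mathlib

/-- A bilinear bracket is a (right) Leibniz bracket:
`[[x,y],z] = [x,[y,z]] + [[x,z],y]`. -/
def IsLeibnizBracket {K L : Type*} [Field K] [AddCommGroup L] [Module K L]
    (b : L →ₗ[K] L →ₗ[K] L) : Prop :=
  ∀ x y z : L, b (b x y) z = b x (b y z) + b (b x z) y

/-- Two bilinear brackets are compatible Leibniz brackets: each is a Leibniz bracket and the
mixed Leibniz identity holds. -/
structure AreCompatibleLeibnizBrackets {K L : Type*} [Field K] [AddCommGroup L] [Module K L]
    (b₁ b₂ : L →ₗ[K] L →ₗ[K] L) : Prop where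
  left : IsLeibnizBracket b₁
  right : IsLeibnizBracket b₂
  mixed : ∀ x y z : L,
    b₂ (b₁ x y) z + b₁ (b₂ x y) z =
      b₂ x (b₁ y z) + b₁ x (b₂ y z) + b₂ (b₁ x z) y + b₁ (b₂ x z) y

/-- `N` is a Nijenhuis operator for the bracket `b`. -/
def IsNijenhuisOperator {K L : Type*} [Field K] [AddCommGroup L] [Module K L]
    (b : L →ₗ[K] L →ₗ[K] L) (N : L →ₗ[K] L) : Prop :=
  ∀ x y : L, b (N x) (N y) = N (b (N x) y + b x (N y) - N (b x y))

/-- The deformed bracket `[x,y]_N = [N(x),y] + [x,N(y)] - N([x,y])`, as a bilinear map. -/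
def nijenhuisBracket {K L : Type*} [Field K] [AddCommGroup L] [Module K L]
    (b : L →ₗ[K] L →ₗ[K] L) (N : L →ₗ[K] L) : L →ₗ[K] L →ₗ[K] L :=
  LinearMap.mk₂ K (fun x y => b (N x) y + b x (N y) - N (b x y))
    (fun x x' y => by simp only [map_add, LinearMap.add_apply]; abel)
    (fun c x y => by simp only [map_smul, LinearMap.smul_apply, smul_add, smul_sub])
    (fun x y y' => by simp only [map_add]; abel)
    (fun c x y => by simp only [map_smul, smul_add, smul_sub])

/-!
Write `J(x, y, z) = [[x,y],z] - [x,[y,z]] - [[x,z],y]` for the failure of the Leibniz identity. For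
an arbitrary bilinear bracket, the failure of the mixed identity of `[-,-]` and `[-,-]_N` is
`J(Nx,y,z) + J(x,Ny,z) + J(x,y,Nz) - N J(x,y,z)`. If `N` is a Nijenhuis operator, then it is a
morphism from `[-,-]_N` to `[-,-]`, and the failure of the Leibniz identity for `[-,-]_N` is
`J(Nx,Ny,z) + J(Nx,y,Nz) + J(x,Ny,Nz)` minus `N` applied to the failure of the mixed identity.
Both vanish when `J` does.
-/

section LeibnizDefect

variable {K L : Type*} [Field K] [AddCommGroup L] [Module K L]

/-- The failure of the Leibniz identity when the outer bracket is `b` and the inner one is `c`.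
The case `c = b` measures how far `b` is from being a Leibniz bracket, and symmetrizing in `b` and
`c` gives the failure of the mixed identity of compatible brackets. -/
def leibnizDefect (b c : L →ₗ[K] L →ₗ[K] L) (x y z : L) : L :=
  b (c x y) z - b x (c y z) - b (c x z) y

theorem isLeibnizBracket_iff_leibnizDefect_eq_zero {b : L →ₗ[K] L →ₗ[K] L} :
    IsLeibnizBracket b ↔ ∀ x y z, leibnizDefect b b x y z = 0 := by
  simp only [IsLeibnizBracket, leibnizDefect, sub_sub, sub_eq_zero]

theorem areCompatibleLeibnizBrackets_iff_leibnizDefect {b₁ b₂ : L →ₗ[K] L →ₗ[K] L} :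
    AreCompatibleLeibnizBrackets b₁ b₂ ↔ IsLeibnizBracket b₁ ∧ IsLeibnizBracket b₂ ∧
      ∀ x y z, leibnizDefect b₂ b₁ x y z + leibnizDefect b₁ b₂ x y z = 0 := by
  have mixed_iff (x y z : L) :
      b₂ (b₁ x y) z + b₁ (b₂ x y) z =
          b₂ x (b₁ y z) + b₁ x (b₂ y z) + b₂ (b₁ x z) y + b₁ (b₂ x z) y ↔
        leibnizDefect b₂ b₁ x y z + leibnizDefect b₁ b₂ x y z = 0 := by
    rw [← sub_eq_zero]
    simp only [leibnizDefect]
    abel_nf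
  simp only [← mixed_iff]
  exact ⟨fun h => ⟨h.left, h.right, h.mixed⟩, fun ⟨h₁, h₂, h⟩ => ⟨h₁, h₂, h⟩⟩

end LeibnizDefect

section NijenhuisBracket

variable {K L : Type*} [Field K] [AddCommGroup L] [Module K L]
  {b : L →ₗ[K] L →ₗ[K] L} {N : L →ₗ[K] L}

theorem nijenhuisBracket_apply (b : L →ₗ[K] L →ₗ[K] L) (N : L →ₗ[K] L) (x y : L) :
    nijenhuisBracket b N x y = b (N x) y + b x (N y) - N (b x y) := rfl

theorem leibnizDefect_nijenhuisBracket_add_leibnizDefect (b : L →ₗ[K] L →ₗ[K] L) (N : L →ₗ[K] L)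
    (x y z : L) :
    leibnizDefect (nijenhuisBracket b N) b x y z + leibnizDefect b (nijenhuisBracket b N) x y z =
      leibnizDefect b b (N x) y z + leibnizDefect b b x (N y) z + leibnizDefect b b x y (N z) -
        N (leibnizDefect b b x y z) := by
  simp only [leibnizDefect, nijenhuisBracket_apply, map_add, map_sub, LinearMap.add_apply,
    LinearMap.sub_apply]
  abel

namespace IsNijenhuisOperator

theorem map_nijenhuisBracket (hN : IsNijenhuisOperator b N) (x y : L) :
    N (nijenhuisBracket b N x y) = b (N x) (N y) :=
  (hN x y).symm

theorem nijenhuisBracket_nijenhuisBracket_left (hN : IsNijenhuisOperator b N) (x y z : L) :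
    nijenhuisBracket b N (nijenhuisBracket b N x y) z =
      b (b (N x) (N y)) z + b (b (N x) y) (N z) + b (b x (N y)) (N z) -
        N (nijenhuisBracket b N (b x y) z + b (nijenhuisBracket b N x y) z) := by
  have inner_expand : b (nijenhuisBracket b N x y) (N z) =
      b (b (N x) y) (N z) + b (b x (N y)) (N z) - N (nijenhuisBracket b N (b x y) z) := by
    simp only [hN.map_nijenhuisBracket, nijenhuisBracket_apply b N x y, map_add, map_sub,
      LinearMap.add_apply, LinearMap.sub_apply]
  rw [nijenhuisBracket_apply b N (nijenhuisBracket b N x y), hN.map_nijenhuisBracket, inner_expand,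
    map_add]
  abel

theorem nijenhuisBracket_nijenhuisBracket_right (hN : IsNijenhuisOperator b N) (x y z : L) :
    nijenhuisBracket b N x (nijenhuisBracket b N y z) =
      b x (b (N y) (N z)) + b (N x) (b (N y) z) + b (N x) (b y (N z)) -
        N (nijenhuisBracket b N x (b y z) + b x (nijenhuisBracket b N y z)) := by
  have inner_expand : b (N x) (nijenhuisBracket b N y z) =
      b (N x) (b (N y) z) + b (N x) (b y (N z)) - N (nijenhuisBracket b N x (b y z)) := by
    simp only [hN.map_nijenhuisBracket, nijenhuisBracket_apply b N y z, map_add, map_sub]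
  rw [nijenhuisBracket_apply b N x (nijenhuisBracket b N y z), hN.map_nijenhuisBracket,
    inner_expand, map_add]
  abel

theorem leibnizDefect_nijenhuisBracket (hN : IsNijenhuisOperator b N) (x y z : L) :
    leibnizDefect (nijenhuisBracket b N) (nijenhuisBracket b N) x y z =
      leibnizDefect b b (N x) (N y) z + leibnizDefect b b (N x) y (N z) +
          leibnizDefect b b x (N y) (N z) -
        N (leibnizDefect (nijenhuisBracket b N) b x y z +
          leibnizDefect b (nijenhuisBracket b N) x y z) := by
  simp only [leibnizDefect, hN.nijenhuisBracket_nijenhuisBracket_left,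
    hN.nijenhuisBracket_nijenhuisBracket_right, map_add, map_sub]
  abel

end IsNijenhuisOperator

end NijenhuisBracket

theorem nijenhuis_compatible_leibniz {K L : Type*} [Field K] [AddCommGroup L] [Module K L]
    (b : L →ₗ[K] L →ₗ[K] L) (hb : IsLeibnizBracket b)
    (N : L →ₗ[K] L) (hN : IsNijenhuisOperator b N) :
    AreCompatibleLeibnizBrackets b (nijenhuisBracket b N) := by
  have defect_zero := isLeibnizBracket_iff_leibnizDefect_eq_zero.mp hb
  have mixed_zero (x y z : L) : leibnizDefect (nijenhuisBracket b N) b x y z +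
      leibnizDefect b (nijenhuisBracket b N) x y z = 0 := by
    simp [leibnizDefect_nijenhuisBracket_add_leibnizDefect, defect_zero]
  have deformed_leibniz : IsLeibnizBracket (nijenhuisBracket b N) :=
    isLeibnizBracket_iff_leibnizDefect_eq_zero.mpr fun x y z => by
      simp [hN.leibnizDefect_nijenhuisBracket, mixed_zero, defect_zero]
  exact areCompatibleLeibnizBrackets_iff_leibnizDefect.mpr ⟨hb, deformed_leibniz, mixed_zero⟩
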